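/- If u is a unit, then the permutation J_u is an automorphism of the fusion rules: for all indices i, j, k one has N_{ij}^k = N_{i,J_u(j)}^{J_u(k)}. -/

import Mathlib

/-!
The columns of `S` are common eigenvectors of the fusion matrices: the `m`-th column of `S` is an
eigenvector of `N_u` with eigenvalue `λ_m = S_{um} / S_{1m}`. When `N_u` is the permutation matrix
of `J_u`, this reads `S_{J_u(j), m} = λ_m S_{jm}`. Permuting the entries of a column preserves its
norm, which is nonzero, so `λ_m * conj λ_m = 1`; the factors `λ_ℓ` and `conj λ_ℓ` that `J_u`
introduces in the `ℓ`-th term of `N_{i, J_u(j)}^{J_u(k)}` therefore cancel.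
-/


open Matrix BigOperators

/-- The Verlinde coefficient `N_{ij}^k = ∑_ℓ S_{iℓ} S_{jℓ} conj(S_{kℓ}) / S_{1ℓ}`. -/
noncomputable def verlN {ι : Type*} [Fintype ι] (one : ι) (S : Matrix ι ι ℂ) (i j k : ι) : ℂ :=
  ∑ ℓ, S i ℓ * S j ℓ * (starRingEnd ℂ) (S k ℓ) / S one ℓ

lemma sum_conj_mul_col {ι : Type*} [Fintype ι] [DecidableEq ι] {S : Matrix ι ι ℂ}
    (hS : S ∈ Matrix.unitaryGroup ι ℂ) (l m : ι) :
    ∑ k, (starRingEnd ℂ) (S k l) * S k m = if l = m then 1 else 0 := by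
  have h := congrFun (congrFun (Matrix.mem_unitaryGroup_iff'.1 hS) l) m
  simpa [Matrix.mul_apply, Matrix.star_apply, Matrix.one_apply] using h

/-- The `m`-th column of `S` is an eigenvector of every fusion matrix `N_u`, with eigenvalue
`S_{um} / S_{1m}`. -/
lemma sum_verlN_mul {ι : Type*} [Fintype ι] [DecidableEq ι] (one : ι) {S : Matrix ι ι ℂ}
    (hS : S ∈ Matrix.unitaryGroup ι ℂ) (u j m : ι) :
    ∑ k, verlN one S u j k * S k m = S u m / S one m * S j m := by
  calc ∑ k, verlN one S u j k * S k m
      = ∑ l, S u l * S j l / S one l * ∑ k, (starRingEnd ℂ) (S k l) * S k m := by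
        simp only [verlN, Finset.sum_mul, Finset.mul_sum]
        rw [Finset.sum_comm]
        refine Finset.sum_congr rfl fun l _ => Finset.sum_congr rfl fun k _ => ?_
        ring
    _ = S u m / S one m * S j m := by
        simp only [sum_conj_mul_col hS, mul_ite, mul_one, mul_zero, Finset.sum_ite_eq',
          Finset.mem_univ, if_true]
        ring

theorem stmt_12 {ι : Type*} [Fintype ι] [DecidableEq ι] (one : ι)
    (S : Matrix ι ι ℂ) (hS : S ∈ Matrix.unitaryGroup ι ℂ)
    (hS1 : ∀ ℓ, S one ℓ ≠ 0)
    (u : ι) (Ju : Equiv.Perm ι)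
    (hunit : ∀ j k, verlN one S u j k = if k = Ju j then 1 else 0) :
    ∀ i j k, verlN one S i j k = verlN one S i (Ju j) (Ju k) := by
  have hJ : ∀ j m, S (Ju j) m = S u m / S one m * S j m := by
    intro j m
    rw [← sum_verlN_mul one hS u j m]
    simp [hunit]
  have hnorm : ∀ m, (starRingEnd ℂ) (S u m / S one m) * (S u m / S one m) = 1 := by
    intro m
    have h1 : ∑ k, (starRingEnd ℂ) (S k m) * S k m = 1 := by
      simpa using sum_conj_mul_col hS m m
    calc (starRingEnd ℂ) (S u m / S one m) * (S u m / S one m)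
        = (starRingEnd ℂ) (S u m / S one m) * (S u m / S one m) *
            ∑ k, (starRingEnd ℂ) (S k m) * S k m := by rw [h1, mul_one]
      _ = ∑ k, (starRingEnd ℂ) (S (Ju k) m) * S (Ju k) m := by
          rw [Finset.mul_sum]
          refine Finset.sum_congr rfl fun k _ => ?_
          rw [hJ, map_mul]
          ring
      _ = 1 := by
          rw [Equiv.sum_comp Ju fun k => (starRingEnd ℂ) (S k m) * S k m, h1]
  intro i j k
  unfold verlN
  refine Finset.sum_congr rfl fun l _ => ?_
  rw [hJ, hJ, map_mul]
  linear_combination (-(S i l * S j l * (starRingEnd ℂ) (S k l) / S one l)) * hnorm l
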